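/- arXiv:1502.07990 — 2 statements merged into one kernel-verified Lean document; each statement's English description precedes it below -/
import Mathlib

section
/- Let α and β be real numbers with 0 < α, 0 < β and α + β < π/2. Then cos(α + β) < √(cos²(β) − sin²(α)); consequently the quantity h = cos(α + β)/√(cos²(β) − sin²(α)) satisfies 0 < h < 1. -/
open Real

/-!
The radicand factors as `cos β ^ 2 - sin α ^ 2 = cos (α + β) * cos (α - β)`, so the square root is
the geometric mean of `cos (α + β)` and `cos (α - β)`. As `cos (α - β)` exceeds `cos (α + β)` by
`2 * sin α * sin β`, this geometric mean exceeds its smaller term `cos (α + β)`.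
-/

theorem lt_sqrt_mul_of_pos_of_lt {a b : ℝ} (ha : 0 < a) (hab : a < b) : a < √(a * b) :=
  lt_sqrt_of_sq_lt <| calc
    a ^ 2 = a * a := sq a
    _ < a * b := mul_lt_mul_of_pos_left hab ha

theorem cos_add_mul_cos_sub (x y : ℝ) :
    cos (x + y) * cos (x - y) = cos y ^ 2 - sin x ^ 2 := by
  rw [cos_add, cos_sub]
  linear_combination cos y ^ 2 * sin_sq_add_cos_sq x - sin x ^ 2 * sin_sq_add_cos_sq y

theorem cos_add_lt_cos_sub_iff {x y : ℝ} : cos (x + y) < cos (x - y) ↔ 0 < sin x * sin y := by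
  rw [cos_add, cos_sub]
  constructor <;> intro h <;> linarith

theorem stmt_5_general (α β : ℝ) (hcos : 0 < cos (α + β)) (hsin : 0 < sin α * sin β) :
    cos (α + β) < √(cos β ^ 2 - sin α ^ 2) ∧
      0 < cos (α + β) / √(cos β ^ 2 - sin α ^ 2) ∧
      cos (α + β) / √(cos β ^ 2 - sin α ^ 2) < 1 := by
  have hlt : cos (α + β) < √(cos β ^ 2 - sin α ^ 2) := by
    rw [← cos_add_mul_cos_sub]
    exact lt_sqrt_mul_of_pos_of_lt hcos (cos_add_lt_cos_sub_iff.2 hsin)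
  have hsqrt : 0 < √(cos β ^ 2 - sin α ^ 2) := hcos.trans hlt
  exact ⟨hlt, div_pos hcos hsqrt, (div_lt_one hsqrt).2 hlt⟩

theorem stmt_5 (α β : ℝ) (hα : 0 < α) (hβ : 0 < β) (hsum : α + β < π / 2) :
    cos (α + β) < Real.sqrt (cos β ^ 2 - sin α ^ 2) ∧
      0 < cos (α + β) / Real.sqrt (cos β ^ 2 - sin α ^ 2) ∧
      cos (α + β) / Real.sqrt (cos β ^ 2 - sin α ^ 2) < 1 :=
  stmt_5_general α β (cos_pos_of_mem_Ioo ⟨by linarith, hsum⟩)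
    (mul_pos (sin_pos_of_pos_of_lt_pi hα (by linarith)) (sin_pos_of_pos_of_lt_pi hβ (by linarith)))
end

section
/- Fix an integer q ≥ 3. For each integer p, let a_p = cos(π/q + π/p), b_p = cos²(π/q) − sin²(π/p), d_p = 2·a_p·√(b_p)/(a_p² + b_p), and δ_p = ln((1 + d_p)/(1 − d_p)). Then δ_p / ln(p) → 2 as p → ∞. -/
open Real Filter

/-!
Put `α = π / q`, `β = π / p`, `u = cos (α + β)` and `v = √(cos² α - sin² β)`, so that
`d = 2uv / (u² + v²)` and `(1 + d) / (1 - d) = ((u + v) / (u - v))²`. At `β = 0` both `u` and `v`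
equal `cos α`, while their derivatives are `-sin α` and `0`. Hence `u - v` vanishes exactly to first
order in `1 / p`, the quotient `(u + v) / (u - v)` grows linearly in `p`, and `δ`, being twice its
logarithm, grows like `2 log p`.
-/

open Topology

/-- The hyperbolic distance from the centre of the Poincaré disc to a point at Euclidean distance
`d < 1`, by Lobachevsky's formula. It is the hyperbolic diameter of a circle through the centre of
Euclidean diameter `d`. -/
noncomputable def hyperbolicLength (d : ℝ) : ℝ :=
  log ((1 + d) / (1 - d))

/-- The Euclidean diameter `d_p` of the circle circumscribing the regular polygon `P_{p,q}` with one
vertex at the centre of the Poincaré disc, as a function of `α = π / q` and `β = π / p`. -/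
noncomputable def circumdiameter (α β : ℝ) : ℝ :=
  2 * cos (α + β) * √(cos α ^ 2 - sin β ^ 2) / (cos (α + β) ^ 2 + (cos α ^ 2 - sin β ^ 2))

theorem hyperbolicLength_two_mul_div {u v : ℝ} (h : u ^ 2 + v ^ 2 ≠ 0) :
    hyperbolicLength (2 * u * v / (u ^ 2 + v ^ 2)) = 2 * log ((u + v) / (u - v)) := by
  have one_add : 1 + 2 * u * v / (u ^ 2 + v ^ 2) = (u + v) ^ 2 / (u ^ 2 + v ^ 2) := by
    field_simp
    ring
  have one_sub : 1 - 2 * u * v / (u ^ 2 + v ^ 2) = (u - v) ^ 2 / (u ^ 2 + v ^ 2) := by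
    field_simp
    ring
  rw [hyperbolicLength, one_add, one_sub, div_div_div_cancel_right₀ h, ← div_pow, log_pow,
    Nat.cast_ofNat]

theorem hyperbolicLength_circumdiameter {α β : ℝ} (h : 0 < cos α ^ 2 - sin β ^ 2) :
    hyperbolicLength (circumdiameter α β) =
      2 * log ((cos (α + β) + √(cos α ^ 2 - sin β ^ 2)) /
        (cos (α + β) - √(cos α ^ 2 - sin β ^ 2))) := by
  have hsq : √(cos α ^ 2 - sin β ^ 2) ^ 2 = cos α ^ 2 - sin β ^ 2 := sq_sqrt h.le
  rw [← hyperbolicLength_two_mul_div (by positivity), hsq, circumdiameter]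

theorem tendsto_log_div_log_of_tendsto_div {ι : Type*} {l : Filter ι} {f g : ι → ℝ} {c : ℝ}
    (hc : c ≠ 0) (hg : Tendsto g l atTop) (hfg : Tendsto (fun i => f i / g i) l (𝓝 c)) :
    Tendsto (fun i => log (f i) / log (g i)) l (𝓝 1) := by
  have hlog : Tendsto (fun i => log (g i)) l atTop := tendsto_log_atTop.comp hg
  have hlim : Tendsto (fun i => log (f i / g i) / log (g i) + 1) l (𝓝 1) := by
    simpa only [zero_add] using ((hfg.log hc).div_atTop hlog).add_const 1
  refine hlim.congr' ?_
  filter_upwards [hfg.eventually_ne hc, hlog.eventually_ne_atTop 0] with i hi hlogi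
  obtain ⟨hfi, hgi⟩ := div_ne_zero_iff.mp hi
  rw [log_div hfi hgi, sub_div, div_self hlogi, sub_add_cancel]

theorem tendsto_mul_add_div_sub_of_hasDerivAt {𝕜 : Type*} [NontriviallyNormedField 𝕜]
    {u v : 𝕜 → 𝕜} {u' v' x : 𝕜} (hu : HasDerivAt u u' x) (hv : HasDerivAt v v' x)
    (huv : u x = v x) (huv' : u' ≠ v') :
    Tendsto (fun y => (y - x) * ((u y + v y) / (u y - v y))) (𝓝[≠] x)
      (𝓝 (2 * u x / (u' - v'))) := by
  have hsum : Tendsto (fun y => u y + v y) (𝓝[≠] x) (𝓝 (2 * u x)) := by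
    have hval : 2 * u x = u x + v x := by rw [← huv, two_mul]
    rw [hval]
    exact (hu.continuousAt.add hv.continuousAt).tendsto.mono_left nhdsWithin_le_nhds
  have hslope : Tendsto (slope (u - v) x) (𝓝[≠] x) (𝓝 (u' - v')) :=
    (hu.sub hv).tendsto_slope
  refine (hsum.div hslope (sub_ne_zero.mpr huv')).congr fun y => ?_
  rw [Pi.div_apply, slope_def_field, Pi.sub_apply, Pi.sub_apply, huv, sub_self, sub_zero,
    div_div_eq_mul_div, mul_comm, mul_div_assoc]

theorem hasDerivAt_sqrt_cos_sq_sub_sin_sq {α : ℝ} (hcos : cos α ≠ 0) :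
    HasDerivAt (fun β => √(cos α ^ 2 - sin β ^ 2)) 0 0 := by
  have hsq : HasDerivAt (fun β => cos α ^ 2 - sin β ^ 2) 0 0 := by
    simpa using ((hasDerivAt_sin 0).pow 2).const_sub (cos α ^ 2)
  simpa using hsq.sqrt (by simpa using hcos)

theorem tendsto_mul_cos_add_sqrt_div_cos_sub_sqrt {α : ℝ} (hcos : 0 < cos α) (hsin : sin α ≠ 0) :
    Tendsto (fun β => β * ((cos (α + β) + √(cos α ^ 2 - sin β ^ 2)) /
      (cos (α + β) - √(cos α ^ 2 - sin β ^ 2)))) (𝓝[≠] 0) (𝓝 (2 * cos α / -sin α)) := by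
  have hderiv : HasDerivAt (fun β => cos (α + β)) (-sin α) 0 := by
    simpa using (hasDerivAt_cos (α + 0)).comp_const_add α 0
  simpa using tendsto_mul_add_div_sub_of_hasDerivAt hderiv
    (hasDerivAt_sqrt_cos_sq_sub_sin_sq hcos.ne') (by simp [hcos.le]) (neg_ne_zero.mpr hsin)

theorem eventually_cos_sq_sub_sin_sq_pos {α : ℝ} (hcos : cos α ≠ 0) :
    ∀ᶠ β in 𝓝 0, 0 < cos α ^ 2 - sin β ^ 2 := by
  have hcont : Continuous fun β => cos α ^ 2 - sin β ^ 2 := by fun_prop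
  exact (hcont.tendsto' 0 (cos α ^ 2) (by simp)).eventually_const_lt (by positivity)

theorem tendsto_const_div_atTop_nhdsNE_zero {c : ℝ} (hc : c ≠ 0) :
    Tendsto (fun p : ℝ => c / p) atTop (𝓝[≠] 0) := by
  refine tendsto_nhdsWithin_iff.mpr ⟨tendsto_const_nhds.div_atTop tendsto_id, ?_⟩
  filter_upwards [eventually_ne_atTop 0] with p hp using div_ne_zero hc hp

theorem tendsto_comp_const_div_div_atTop {f : ℝ → ℝ} {c L : ℝ} (hc : c ≠ 0)
    (hf : Tendsto (fun x => x * f x) (𝓝[≠] 0) (𝓝 L)) :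
    Tendsto (fun p => f (c / p) / p) atTop (𝓝 (L / c)) := by
  refine ((hf.comp (tendsto_const_div_atTop_nhdsNE_zero hc)).div_const c).congr fun p => ?_
  simp only [Function.comp_apply]
  field_simp

theorem stmt_11_general {α : ℝ} (hcos : 0 < cos α) (hsin : sin α ≠ 0) :
    Tendsto (fun p : ℝ => hyperbolicLength (circumdiameter α (π / p)) / log p) atTop (𝓝 2) := by
  have hlinear := tendsto_comp_const_div_div_atTop pi_ne_zero
    (tendsto_mul_cos_add_sqrt_div_cos_sub_sqrt hcos hsin)
  have hne : 2 * cos α / -sin α / π ≠ 0 := by simp [hcos.ne', hsin, pi_ne_zero]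
  have hlog := (tendsto_log_div_log_of_tendsto_div hne tendsto_id hlinear).const_mul 2
  rw [mul_one] at hlog
  have hβ : Tendsto (fun p : ℝ => π / p) atTop (𝓝 0) := tendsto_const_nhds.div_atTop tendsto_id
  refine hlog.congr' ?_
  filter_upwards [hβ.eventually (eventually_cos_sq_sub_sin_sq_pos hcos.ne')] with p hp
  rw [hyperbolicLength_circumdiameter hp, mul_div_assoc, id]

theorem cos_pi_div_pos {x : ℝ} (hx : 2 < x) : 0 < cos (π / x) := by
  have hlt : π / x < π / 2 := div_lt_div_of_pos_left pi_pos two_pos hx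
  have hpos : 0 < π / x := by positivity
  exact cos_pos_of_mem_Ioo ⟨by linarith, hlt⟩

theorem sin_pi_div_pos {x : ℝ} (hx : 1 < x) : 0 < sin (π / x) :=
  sin_pos_of_pos_of_lt_pi (by positivity) (div_lt_self pi_pos hx)

theorem stmt_11 (q : ℕ) (hq : 3 ≤ q) :
    Tendsto (fun p : ℕ =>
        Real.log
            ((1 + 2 * cos (π / q + π / p) * Real.sqrt (cos (π / q) ^ 2 - sin (π / p) ^ 2) /
                (cos (π / q + π / p) ^ 2 + (cos (π / q) ^ 2 - sin (π / p) ^ 2))) /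
              (1 - 2 * cos (π / q + π / p) * Real.sqrt (cos (π / q) ^ 2 - sin (π / p) ^ 2) /
                (cos (π / q + π / p) ^ 2 + (cos (π / q) ^ 2 - sin (π / p) ^ 2)))) /
          Real.log p)
      atTop (nhds 2) := by
  have two_lt : (2 : ℝ) < q := mod_cast hq
  have hsin : sin (π / q) ≠ 0 := (sin_pi_div_pos (one_lt_two.trans two_lt)).ne'
  exact (stmt_11_general (cos_pi_div_pos two_lt) hsin).comp tendsto_natCast_atTop_atTop
end
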